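/- Let (Ω,Σ,P) be a probability space whose measure P has the Darboux property, and let I be an additive partition entropy. Let λ>0 and let V, W be disjoint measurable sets with P(V)=P(W). If 𝒜, ℬ ∈ F_λ(V,W), then I(T_{V,W}𝒜) − I(𝒜) = I(T_{V,W}ℬ) − I(ℬ). -/

import Mathlib

/-!
Write `Δ(𝒜) = I(T_{V,W}𝒜) − I(𝒜)`.  The idea is to write one partition as an independent join in
two different ways.

Transfer (`incr_exch`).  Let `𝒳 ⊥ 𝒜`, and suppose that an atom `X₁` of `𝒳` contains `V ∪ W` and that
`P(X₂) = λ P(X₁)` for another atom `X₂`.  The cells `A₁ ∩ X₂` and `A₂ ∩ X₁` of the join have equal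
measure, so exchanging their labels gives a second factorisation `𝒜·𝒳 = 𝒜'·𝒢`.  Now `V` and `W` lie
in different atoms of `𝒜` but in the same atom of `𝒳`, while they lie in the same atom of `𝒜'` but
in different atoms of `𝒢`.  The swap of `V` and `W` in the join is therefore both `T𝒜·𝒳` and
`𝒜'·T𝒢`, and additivity yields `Δ(𝒜) = Δ(𝒢)`.

Let now `P(V)` be small compared with the masses of the atoms.  Using the Darboux property, choose
`𝒳` with three atoms of measures `d, λd, 1 − (1+λ)d`.  The transfer replaces `𝒜` by a partition `𝒢`
with three atoms of these measures, the first two containing `V` and `W` (`exists_tri`).  Reduce `ℬ`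
in the same way to `𝒢'`, making its two small atoms disjoint, outside `V ∪ W`, from those of `𝒢`.
A further transfer leads from `𝒢` and from `𝒢'` to the same three-atom partition, because a target
only has to meet the atoms of its source in prescribed measures (`incr_tri_eq_target`), and the
conditions coming from `𝒢` and `𝒢'` can be met together (`incr_tri_eq`).

For general `V` and `W`, perform the swap in small portions (`incr_eq`): a swap preserves the measures
of the atoms, and the smallness required of `P(V)` depends only on these.
-/

open MeasureTheory Filter Topology

namespace APE

variable {Ω : Type*} [MeasurableSpace Ω]

/-- A finite measurable partition of `Ω`: a finite collection of nonempty pairwise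
disjoint measurable sets whose union is `Ω`. -/
def IsFinPart (𝒜 : Finset (Set Ω)) : Prop :=
  (∀ A ∈ 𝒜, MeasurableSet A) ∧ (∀ A ∈ 𝒜, A ≠ ∅) ∧
    (𝒜 : Set (Set Ω)).PairwiseDisjoint id ∧ ⋃₀ (𝒜 : Set (Set Ω)) = Set.univ

/-- The join (common refinement) `𝒜 ∨ ℬ` of two finite partitions. -/
noncomputable def join (𝒜 ℬ : Finset (Set Ω)) : Finset (Set Ω) := by
  classical
  exact ((𝒜 ×ˢ ℬ).image fun p => p.1 ∩ p.2).filter fun s => s ≠ ∅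

/-- Stochastic independence `𝒜 ⊥ ℬ` of two finite partitions. -/
def Indep (P : Measure Ω) (𝒜 ℬ : Finset (Set Ω)) : Prop :=
  ∀ A ∈ 𝒜, ∀ B ∈ ℬ, P (A ∩ B) = P A * P B

/-- An additive partition entropy: `I (𝒜·ℬ) = I 𝒜 + I ℬ` for independent partitions. -/
def IsAPE (P : Measure Ω) (I : Finset (Set Ω) → ℝ) : Prop :=
  ∀ 𝒜 ℬ : Finset (Set Ω), IsFinPart 𝒜 → IsFinPart ℬ → Indep P 𝒜 ℬ →
    I (join 𝒜 ℬ) = I 𝒜 + I ℬ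

/-- Restriction `𝒜|S` of a partition to a set `S`. -/
noncomputable def restr (𝒜 : Finset (Set Ω)) (S : Set Ω) : Finset (Set Ω) := by
  classical
  exact (𝒜.image fun A => A ∩ S).filter fun s => s ≠ ∅

/-- The number `N(𝒜)` of atoms of positive measure. -/
noncomputable def numPos (P : Measure Ω) (𝒜 : Finset (Set Ω)) : ℕ := by
  classical
  exact (𝒜.filter fun A => 0 < P A).card

/-- The pseudometric `D` on finite partitions. -/
noncomputable def Ddist (P : Measure Ω) (𝒜 ℬ : Finset (Set Ω)) : ℝ :=
  sInf ((fun Z => (P Z).toReal) ''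
      {Z : Set Ω | MeasurableSet Z ∧ restr 𝒜 Zᶜ = restr ℬ Zᶜ}) +
    |(numPos P 𝒜 : ℝ) - (numPos P ℬ : ℝ)|

/-- Continuity of `I` with respect to the pseudometric `D`. -/
def CtsD (P : Measure Ω) (I : Finset (Set Ω) → ℝ) : Prop :=
  ∀ 𝒜 : Finset (Set Ω), IsFinPart 𝒜 → ∀ ε : ℝ, 0 < ε → ∃ δ : ℝ, 0 < δ ∧
    ∀ ℬ : Finset (Set Ω), IsFinPart ℬ → Ddist P 𝒜 ℬ < δ → |I ℬ - I 𝒜| < ε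

/-- The two-atom partition `{A, Ω ∖ A}`. -/
noncomputable def twoPart (A : Set Ω) : Finset (Set Ω) := by
  classical
  exact {A, Aᶜ}

/-- Continuity of `I` on the family `𝔄₂` of two-atom partitions. -/
def CtsOnA2 (P : Measure Ω) (I : Finset (Set Ω) → ℝ) : Prop :=
  ∀ (A : Set Ω) (As : ℕ → Set Ω), MeasurableSet A → (∀ n, MeasurableSet (As n)) →
    0 < P A → P A < 1 →
    Tendsto (fun n => (P (symmDiff A (As n))).toReal) atTop (𝓝 0) →
    Tendsto (fun n => I (twoPart (As n))) atTop (𝓝 (I (twoPart A)))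

/-- The Darboux property of a measure. -/
def Darboux (P : Measure Ω) : Prop :=
  ∀ A : Set Ω, MeasurableSet A → ∀ θ : ENNReal, 0 < θ → θ < P A →
    ∃ B : Set Ω, MeasurableSet B ∧ B ⊆ A ∧ P B = θ

/-- Nonatomicity of a measure. -/
def NonAtomic (P : Measure Ω) : Prop :=
  ∀ A : Set Ω, MeasurableSet A → 0 < P A →
    ∃ B : Set Ω, MeasurableSet B ∧ B ⊆ A ∧ 0 < P B ∧ P B < P A

/-- A finitely additive real set function on measurable sets. -/
def FinAdd (m : Set Ω → ℝ) : Prop :=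
  ∀ A B : Set Ω, MeasurableSet A → MeasurableSet B → Disjoint A B →
    m (A ∪ B) = m A + m B

/-- A countably additive real set function on measurable sets. -/
def CountAdd (m : Set Ω → ℝ) : Prop :=
  ∀ f : ℕ → Set Ω, (∀ n, MeasurableSet (f n)) →
    (∀ i j, i ≠ j → Disjoint (f i) (f j)) →
    HasSum (fun n => m (f n)) (m (⋃ n, f n))

/-- Absolute continuity of `m` with respect to `P`. -/
def AbsCont (P : Measure Ω) (m : Set Ω → ℝ) : Prop :=
  ∀ ε : ℝ, 0 < ε → ∃ δ : ℝ, 0 < δ ∧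
    ∀ A : Set Ω, MeasurableSet A → (P A).toReal < δ → |m A| < ε

/-- The entropy `L_m(𝒜) = Σ_{A∈𝒜} m(A)·log₂(1/P(A))`.  (If `P A = 0` then the
corresponding term vanishes: `m A = 0` for `m` vanishing on null sets, which
implements the convention `0·(+∞) = 0`.) -/
noncomputable def Lm (P : Measure Ω) (m : Set Ω → ℝ) (𝒜 : Finset (Set Ω)) : ℝ :=
  ∑ A ∈ 𝒜, m A * Real.logb 2 (1 / (P A).toReal)

/-- Two partitions have the same measures of atoms. -/
def SameMeasures (P : Measure Ω) (𝒜 ℬ : Finset (Set Ω)) : Prop :=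
  ∃ e : {A : Set Ω // A ∈ 𝒜} ≃ {B : Set Ω // B ∈ ℬ}, ∀ A, P (e A).1 = P A.1

/-- `I` depends solely on the measures of atoms. -/
def DependsOnMeasures (P : Measure Ω) (I : Finset (Set Ω) → ℝ) : Prop :=
  ∀ 𝒜 ℬ : Finset (Set Ω), IsFinPart 𝒜 → IsFinPart ℬ → SameMeasures P 𝒜 ℬ → I 𝒜 = I ℬ

/-- The operation `T_{V,W}`, replacing the atom `A₁ ⊇ V` by `(A₁∖V)∪W` and the atom
`A₂ ⊇ W` by `(A₂∖W)∪V`. -/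
noncomputable def swap (V W A₁ A₂ : Set Ω) (𝒜 : Finset (Set Ω)) : Finset (Set Ω) := by
  classical
  exact insert ((A₁ \ V) ∪ W) (insert ((A₂ \ W) ∪ V) ((𝒜.erase A₁).erase A₂))

/-- `ε(λ) = min (1/(1+λ)) (1/(1+λ⁻¹))`. -/
noncomputable def epsFun (lam : ℝ) : ℝ := min (1 / (1 + lam)) (1 / (1 + lam⁻¹))

/-- An indexed finite measurable partition. -/
def IsPartIdx {n : ℕ} (A : Fin n → Set Ω) : Prop :=
  (∀ i, MeasurableSet (A i)) ∧ (∀ i, A i ≠ ∅) ∧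
    (∀ i j, i ≠ j → Disjoint (A i) (A j)) ∧ (⋃ i, A i) = Set.univ

/-- The finset of atoms of an indexed partition. -/
noncomputable def idxFinset {n : ℕ} (A : Fin n → Set Ω) : Finset (Set Ω) := by
  classical
  exact Finset.univ.image A

/-- The two-atom family `{A, B}`. -/
noncomputable def pairPart (A B : Set Ω) : Finset (Set Ω) := by
  classical
  exact {A, B}

/-- Membership of `𝒜` in `F_λ(V,W)`, with designated distinct atoms `A₁ ⊇ V`,
`A₂ ⊇ W` such that `P(A₂)/P(A₁) = λ`. -/
def memF (P : Measure Ω) (V W : Set Ω) (lam : ℝ) (𝒜 : Finset (Set Ω))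
    (A₁ A₂ : Set Ω) : Prop :=
  IsFinPart 𝒜 ∧ A₁ ∈ 𝒜 ∧ A₂ ∈ 𝒜 ∧ A₁ ≠ A₂ ∧ V ⊆ A₁ ∧ W ⊆ A₂ ∧
    (P A₂).toReal / (P A₁).toReal = lam

/-- Measurable sets with rational measure. -/
def InRat (P : Measure Ω) (A : Set Ω) : Prop :=
  MeasurableSet A ∧ ∃ q : ℚ, (P A).toReal = (q : ℝ)

/-- The characteristic properties of `Δ(V,W,λ)` associated with an additive
partition entropy `I` (Proposition 3 of the paper). -/
def DeltaSpec (P : Measure Ω) (I : Finset (Set Ω) → ℝ)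
    (Δ : Set Ω → Set Ω → ℝ → ℝ) : Prop :=
  (∀ V W : Set Ω, ∀ lam : ℝ, MeasurableSet V → MeasurableSet W → P V = P W →
      0 < lam → Disjoint V W →
      ∀ 𝒜 A₁ A₂, memF P V W lam 𝒜 A₁ A₂ →
        Δ V W lam = I (swap V W A₁ A₂ 𝒜) - I 𝒜) ∧
  (∀ U V W : Set Ω, ∀ lam : ℝ, MeasurableSet U → MeasurableSet V → MeasurableSet W →
      P U = P V → P V = P W → 0 < lam →
      Δ U W lam = Δ U V lam + Δ V W lam) ∧
  (∀ V₁ V₂ W₁ W₂ : Set Ω, ∀ lam : ℝ, MeasurableSet V₁ → MeasurableSet V₂ →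
      MeasurableSet W₁ → MeasurableSet W₂ → Disjoint V₁ V₂ → Disjoint W₁ W₂ →
      P V₁ = P W₁ → P V₂ = P W₂ → 0 < lam →
      Δ (V₁ ∪ V₂) (W₁ ∪ W₂) lam = Δ V₁ W₁ lam + Δ V₂ W₂ lam) ∧
  (∀ V W : Set Ω, ∀ kap lam : ℝ, MeasurableSet V → MeasurableSet W → P V = P W →
      0 < kap → 0 < lam →
      Δ V W (kap * lam) = Δ V W kap + Δ V W lam)

/-! ### Partitions as fibres of labellings -/

open Classical in
/-- The partition of `Ω` into the nonempty fibres of a labelling `φ`.  Working with labellings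
instead of families of sets turns the join into the pair labelling. -/
noncomputable def part {ι : Type*} [Fintype ι] (φ : Ω → ι) : Finset (Set Ω) :=
  (Finset.univ.image fun i => φ ⁻¹' {i}).filter fun s => s ≠ ∅

open Classical in
/-- The operation `T_{V,W}` on labellings: points of `V` (of label `i` in all uses) receive the
label `j`, and points of `W` (of label `j`) receive the label `i`. -/
noncomputable def swapLab {ι : Type*} (V W : Set Ω) (i j : ι) (φ : Ω → ι) : Ω → ι :=
  fun ω => if ω ∈ V then j else if ω ∈ W then i else φ ω

/-- The increment `I(T_{V,W}𝒜) − I(𝒜)` for the partition `𝒜` given by a labelling. -/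
noncomputable def incr {ι : Type*} [Fintype ι] (I : Finset (Set Ω) → ℝ) (V W : Set Ω) (i j : ι)
    (φ : Ω → ι) : ℝ :=
  I (part (swapLab V W i j φ)) - I (part φ)

/-- All fibres of the labelling are measurable. -/
def MeasLab {ι : Type*} (φ : Ω → ι) : Prop := ∀ i, MeasurableSet (φ ⁻¹' {i})

/-- The pair labelling, whose partition is the join. -/
def pairLab {ι κ : Type*} (φ : Ω → ι) (ψ : Ω → κ) : Ω → ι × κ := fun ω => (φ ω, ψ ω)

/-- Independence of two labellings.  The law of a labelling is recorded by the real numbers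
`P.real (φ ⁻¹' {i})`; empty fibres are allowed. -/
def IndepLab {ι κ : Type*} (P : Measure Ω) (φ : Ω → ι) (ψ : Ω → κ) : Prop :=
  ∀ i j, P.real (pairLab φ ψ ⁻¹' {(i, j)}) = P.real (φ ⁻¹' {i}) * P.real (ψ ⁻¹' {j})

omit [MeasurableSpace Ω] in
lemma pairLab_preimage {ι κ : Type*} (φ : Ω → ι) (ψ : Ω → κ) (i : ι) (j : κ) :
    pairLab φ ψ ⁻¹' {(i, j)} = φ ⁻¹' {i} ∩ ψ ⁻¹' {j} := by
  ext ω; simp [pairLab]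

lemma MeasLab.pair {ι κ : Type*} {φ : Ω → ι} {ψ : Ω → κ} (hφ : MeasLab φ) (hψ : MeasLab ψ) :
    MeasLab (pairLab φ ψ) := by
  rintro ⟨i, j⟩
  rw [pairLab_preimage]
  exact (hφ i).inter (hψ j)

lemma MeasLab.preimage {ι : Type*} [Finite ι] {φ : Ω → ι} (hφ : MeasLab φ) (s : Set ι) :
    MeasurableSet (φ ⁻¹' s) := by
  rw [← Set.biUnion_preimage_singleton]
  exact MeasurableSet.biUnion s.to_countable fun i _ => hφ i

lemma MeasLab.comp {ι κ : Type*} [Finite ι] {φ : Ω → ι} (hφ : MeasLab φ) (f : ι → κ) :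
    MeasLab (fun ω => f (φ ω)) := fun k => hφ.preimage (f ⁻¹' {k})

lemma isFinPart_part {ι : Type*} [Fintype ι] {φ : Ω → ι} (hφ : MeasLab φ) :
    IsFinPart (part φ) := by
  classical
  refine ⟨?_, ?_, ?_, ?_⟩
  · intro A hA
    simp only [part, Finset.mem_filter, Finset.mem_image, Finset.mem_univ, true_and] at hA
    obtain ⟨⟨i, rfl⟩, -⟩ := hA
    exact hφ i
  · intro A hA
    simp only [part, Finset.mem_filter] at hA
    exact hA.2
  · intro A hA B hB hAB
    simp only [part, Finset.coe_filter, Finset.mem_image, Finset.mem_univ, true_and,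
      Set.mem_ofPred_eq] at hA hB
    obtain ⟨⟨i, rfl⟩, -⟩ := hA
    obtain ⟨⟨j, rfl⟩, -⟩ := hB
    refine Set.disjoint_left.2 fun ω h1 h2 => hAB ?_
    simp only [id, Set.mem_preimage, Set.mem_singleton_iff] at h1 h2
    rw [← h1, ← h2]
  · refine Set.eq_univ_of_forall fun ω => ⟨φ ⁻¹' {φ ω}, ?_, rfl⟩
    simp only [part, Finset.coe_filter, Finset.mem_image, Finset.mem_univ, true_and,
      Set.mem_ofPred_eq]
    exact ⟨⟨_, rfl⟩, Set.Nonempty.ne_empty ⟨ω, rfl⟩⟩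

omit [MeasurableSpace Ω] in
lemma join_part {ι κ : Type*} [Fintype ι] [Fintype κ] (φ : Ω → ι) (ψ : Ω → κ) :
    join (part φ) (part ψ) = part (pairLab φ ψ) := by
  classical
  ext s
  simp only [join, part, Finset.mem_filter, Finset.mem_image, Finset.mem_product,
    Finset.mem_univ, true_and, Prod.exists, pairLab_preimage]
  constructor
  · rintro ⟨⟨_, _, ⟨⟨⟨i, rfl⟩, -⟩, ⟨j, rfl⟩, -⟩, rfl⟩, h⟩
    exact ⟨⟨i, j, rfl⟩, h⟩
  · rintro ⟨⟨i, j, rfl⟩, h⟩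
    refine ⟨⟨_, _, ⟨⟨⟨i, rfl⟩, ?_⟩, ⟨j, rfl⟩, ?_⟩, rfl⟩, h⟩
    · intro h'; exact h (by rw [h', Set.empty_inter])
    · intro h'; exact h (by rw [h', Set.inter_empty])

omit [MeasurableSpace Ω] in
/-- Renaming labels by a bijection does not change the partition. -/
lemma part_equiv {ι : Type*} [Fintype ι] (φ ψ : Ω → ι) (e : ι ≃ ι) (h : ∀ ω, ψ ω = e (φ ω)) :
    part ψ = part φ := by
  classical
  have hf : ∀ i, ψ ⁻¹' {i} = φ ⁻¹' {e.symm i} := by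
    intro i; ext ω; simp [h, Equiv.eq_symm_apply]
  unfold part
  congr 1
  ext s
  simp only [Finset.mem_image, Finset.mem_univ, true_and, hf]
  exact ⟨fun ⟨i, hi⟩ => ⟨_, hi⟩, fun ⟨i, hi⟩ => ⟨e i, by simpa using hi⟩⟩

lemma IndepLab.entropy {ι κ : Type*} [Fintype ι] [Fintype κ] {P : Measure Ω}
    [IsProbabilityMeasure P] {I : Finset (Set Ω) → ℝ} (hAPE : IsAPE P I)
    {φ : Ω → ι} {ψ : Ω → κ} (hφ : MeasLab φ) (hψ : MeasLab ψ) (h : IndepLab P φ ψ) :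
    I (part (pairLab φ ψ)) = I (part φ) + I (part ψ) := by
  classical
  rw [← join_part]
  refine hAPE _ _ (isFinPart_part hφ) (isFinPart_part hψ) ?_
  intro A hA B hB
  simp only [part, Finset.mem_filter, Finset.mem_image, Finset.mem_univ, true_and] at hA hB
  obtain ⟨⟨i, rfl⟩, -⟩ := hA
  obtain ⟨⟨j, rfl⟩, -⟩ := hB
  have := h i j
  rw [pairLab_preimage] at this
  rw [← ENNReal.toReal_eq_toReal_iff' (measure_ne_top _ _)
    (ENNReal.mul_ne_top (measure_ne_top _ _) (measure_ne_top _ _)), ENNReal.toReal_mul]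
  exact this

section SwapLab

variable {ι : Type*} {V W : Set Ω} {i j : ι} {φ : Ω → ι}

omit [MeasurableSpace Ω] in
lemma swapLab_preimage_left (hij : i ≠ j) (hVi : V ⊆ φ ⁻¹' {i}) (hWj : W ⊆ φ ⁻¹' {j}) :
    swapLab V W i j φ ⁻¹' {i} = (φ ⁻¹' {i} \ V) ∪ W := by
  ext ω
  have h1 := @hVi ω
  have h2 := @hWj ω
  simp only [Set.mem_preimage, Set.mem_singleton_iff, swapLab, Set.mem_union, Set.mem_sdiff] at *
  split_ifs <;> grind

omit [MeasurableSpace Ω] in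
lemma swapLab_preimage_right (hij : i ≠ j) (hVi : V ⊆ φ ⁻¹' {i}) (hWj : W ⊆ φ ⁻¹' {j}) :
    swapLab V W i j φ ⁻¹' {j} = (φ ⁻¹' {j} \ W) ∪ V := by
  ext ω
  have h1 := @hVi ω
  have h2 := @hWj ω
  simp only [Set.mem_preimage, Set.mem_singleton_iff, swapLab, Set.mem_union, Set.mem_sdiff] at *
  split_ifs <;> grind

omit [MeasurableSpace Ω] in
lemma swapLab_preimage_other (hVi : V ⊆ φ ⁻¹' {i}) (hWj : W ⊆ φ ⁻¹' {j})
    {k : ι} (hki : k ≠ i) (hkj : k ≠ j) :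
    swapLab V W i j φ ⁻¹' {k} = φ ⁻¹' {k} := by
  ext ω
  have h1 := @hVi ω
  have h2 := @hWj ω
  simp only [Set.mem_preimage, Set.mem_singleton_iff, swapLab] at *
  split_ifs <;> grind

lemma MeasLab.swapLab (hij : i ≠ j) (hV : MeasurableSet V) (hW : MeasurableSet W)
    (hVi : V ⊆ φ ⁻¹' {i}) (hWj : W ⊆ φ ⁻¹' {j}) (hφ : MeasLab φ) :
    MeasLab (swapLab V W i j φ) := by
  intro k
  by_cases hki : k = i
  · subst hki
    rw [swapLab_preimage_left hij hVi hWj]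
    exact ((hφ _).diff hV).union hW
  by_cases hkj : k = j
  · subst hkj
    rw [swapLab_preimage_right hij hVi hWj]
    exact ((hφ _).diff hW).union hV
  rw [swapLab_preimage_other hVi hWj hki hkj]
  exact hφ k

/-- A swap of sets of equal measure preserves the law of the labelling. -/
lemma law_swapLab {P : Measure Ω} [IsProbabilityMeasure P] (hij : i ≠ j)
    (hV : MeasurableSet V) (hW : MeasurableSet W)
    (hVi : V ⊆ φ ⁻¹' {i}) (hWj : W ⊆ φ ⁻¹' {j}) (hVW : P.real V = P.real W) (k : ι) :
    P.real (swapLab V W i j φ ⁻¹' {k}) = P.real (φ ⁻¹' {k}) := by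
  have hd : Disjoint (φ ⁻¹' {i}) (φ ⁻¹' {j}) :=
    Disjoint.preimage _ (Set.disjoint_singleton.2 hij)
  by_cases hki : k = i
  · subst hki
    rw [swapLab_preimage_left hij hVi hWj,
      measureReal_union (hd.mono Set.sdiff_subset hWj) hW, measureReal_sdiff hVi hV]
    linarith
  by_cases hkj : k = j
  · subst hkj
    rw [swapLab_preimage_right hij hVi hWj,
      measureReal_union (hd.symm.mono Set.sdiff_subset hVi) hV, measureReal_sdiff hWj hW]
    linarith
  rw [swapLab_preimage_other hVi hWj hki hkj]

end SwapLab

lemma sum_pair_left {ι κ : Type*} [Fintype κ] {P : Measure Ω} [IsProbabilityMeasure P]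
    {φ : Ω → ι} {ψ : Ω → κ} (hφ : MeasLab φ) (hψ : MeasLab ψ) (i : ι) :
    ∑ j, P.real (pairLab φ ψ ⁻¹' {(i, j)}) = P.real (φ ⁻¹' {i}) := by
  rw [← measureReal_biUnion_finset]
  · congr 1
    ext ω
    simp [pairLab]
  · intro a _ b _ hab
    exact Disjoint.preimage _ (by simpa using hab)
  · intro j _
    exact hφ.pair hψ _

lemma sum_pair_right {ι κ : Type*} [Fintype ι] {P : Measure Ω} [IsProbabilityMeasure P]
    {φ : Ω → ι} {ψ : Ω → κ} (hφ : MeasLab φ) (hψ : MeasLab ψ) (j : κ) :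
    ∑ i, P.real (pairLab φ ψ ⁻¹' {(i, j)}) = P.real (ψ ⁻¹' {j}) := by
  rw [← measureReal_biUnion_finset]
  · congr 1
    ext ω
    simp [pairLab]
  · intro a _ b _ hab
    exact Disjoint.preimage _ (by simpa using hab)
  · intro i _
    exact hφ.pair hψ _

lemma sum_law {ι : Type*} [Fintype ι] {P : Measure Ω} [IsProbabilityMeasure P]
    {φ : Ω → ι} (hφ : MeasLab φ) : ∑ i, P.real (φ ⁻¹' {i}) = 1 := by
  rw [← measureReal_biUnion_finset]
  · have : ⋃ i ∈ (Finset.univ : Finset ι), φ ⁻¹' {i} = Set.univ := by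
      ext ω; simp
    rw [this]; simp
  · intro a _ b _ hab
    exact Disjoint.preimage _ (by simpa using hab)
  · intro i _
    exact hφ i

/-! ### Exchanging two cells of a product -/

/-- The transposition of the labels `(i₁, j₂)` and `(i₂, j₁)` of a product labelling. -/
noncomputable def exch {ι κ : Type*} (i₁ i₂ : ι) (j₁ j₂ : κ) : ι × κ ≃ ι × κ := by
  classical exact Equiv.swap (i₁, j₂) (i₂, j₁)

/-- If `φ ⊥ ξ` and the cells `(i₁, j₂)` and `(i₂, j₁)` have equal measure, then exchanging these
two cells yields a new factorisation `φ' ⊥ γ` of the same join, with the law of `γ` equal to that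
of `ξ`. -/
lemma exch_law {ι κ : Type*} [Fintype ι] [Fintype κ] {P : Measure Ω} [IsProbabilityMeasure P]
    {φ : Ω → ι} {ξ : Ω → κ} (hφ : MeasLab φ) (hξ : MeasLab ξ) (h : IndepLab P φ ξ)
    {i₁ i₂ : ι} {j₁ j₂ : κ}
    (hr : P.real (φ ⁻¹' {i₁}) * P.real (ξ ⁻¹' {j₂}) =
      P.real (φ ⁻¹' {i₂}) * P.real (ξ ⁻¹' {j₁})) (φ' : Ω → ι) (γ : Ω → κ)
    (he : ∀ ω, (φ' ω, γ ω) = exch i₁ i₂ j₁ j₂ (φ ω, ξ ω)) :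
    MeasLab φ' ∧ MeasLab γ ∧ IndepLab P φ' γ ∧
      ∀ j, P.real (γ ⁻¹' {j}) = P.real (ξ ⁻¹' {j}) := by
  classical
  have hp : MeasLab (pairLab φ ξ) := hφ.pair hξ
  have hmφ : MeasLab φ' := by
    have : φ' = fun ω => (exch i₁ i₂ j₁ j₂ (pairLab φ ξ ω)).1 := by
      ext ω; rw [show pairLab φ ξ ω = (φ ω, ξ ω) from rfl, ← he ω]
    rw [this]; exact hp.comp fun x => (exch i₁ i₂ j₁ j₂ x).1
  have hmγ : MeasLab γ := by
    have : γ = fun ω => (exch i₁ i₂ j₁ j₂ (pairLab φ ξ ω)).2 := by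
      ext ω; rw [show pairLab φ ξ ω = (φ ω, ξ ω) from rfl, ← he ω]
    rw [this]; exact hp.comp fun x => (exch i₁ i₂ j₁ j₂ x).2
  have hlaw : ∀ i j, P.real (pairLab φ' γ ⁻¹' {(i, j)}) =
      P.real (φ ⁻¹' {i}) * P.real (ξ ⁻¹' {j}) := by
    intro i j
    have h1 : pairLab φ' γ ⁻¹' {(i, j)} =
        pairLab φ ξ ⁻¹' {(exch i₁ i₂ j₁ j₂).symm (i, j)} := by
      ext ω
      simp only [Set.mem_preimage, Set.mem_singleton_iff, pairLab, he, Equiv.eq_symm_apply]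
    rw [h1]
    simp only [exch, Equiv.symm_swap]
    by_cases c1 : (i, j) = (i₁, j₂)
    · rw [c1, Equiv.swap_apply_left, h]
      simp only [Prod.mk.injEq] at c1
      rw [c1.1, c1.2, hr]
    by_cases c2 : (i, j) = (i₂, j₁)
    · rw [c2, Equiv.swap_apply_right, h]
      simp only [Prod.mk.injEq] at c2
      rw [c2.1, c2.2, hr]
    rw [Equiv.swap_apply_of_ne_of_ne c1 c2, h]
  have h1 : ∀ i, P.real (φ' ⁻¹' {i}) = P.real (φ ⁻¹' {i}) := by
    intro i
    rw [← sum_pair_left hmφ hmγ, Finset.sum_congr rfl fun j _ => hlaw i j, ← Finset.mul_sum,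
      sum_law hξ, mul_one]
  have h2 : ∀ j, P.real (γ ⁻¹' {j}) = P.real (ξ ⁻¹' {j}) := by
    intro j
    rw [← sum_pair_right hmφ hmγ, Finset.sum_congr rfl fun i _ => hlaw i j, ← Finset.sum_mul,
      sum_law hφ, one_mul]
  refine ⟨hmφ, hmγ, fun i j => ?_, h2⟩
  rw [hlaw, h1, h2]

/-- The transfer principle.  `V` and `W` lie in the cells `(i₁, j₁)` and `(i₂, j₁)` of the join of
`φ` and `ξ`, so swapping them there amounts to swapping them in `φ`.  In the factorisation after the
exchange, the same two cells are `(i₁, j₁)` and `(i₁, j₂)`, so the swap now happens in `γ`, and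
additivity gives the same increment for `φ` as for `γ`. -/
lemma incr_exch {ι κ : Type*} [Fintype ι] [Fintype κ] {P : Measure Ω} [IsProbabilityMeasure P]
    {I : Finset (Set Ω) → ℝ} (hAPE : IsAPE P I)
    {φ : Ω → ι} {ξ γ : Ω → κ} (hφ : MeasLab φ) (hξ : MeasLab ξ) (h : IndepLab P φ ξ)
    {i₁ i₂ : ι} {j₁ j₂ : κ} (hi : i₁ ≠ i₂) (hj : j₁ ≠ j₂)
    (hr : P.real (φ ⁻¹' {i₁}) * P.real (ξ ⁻¹' {j₂}) =
      P.real (φ ⁻¹' {i₂}) * P.real (ξ ⁻¹' {j₁}))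
    {V W : Set Ω} (hV : MeasurableSet V) (hW : MeasurableSet W) (hVW : P.real V = P.real W)
    (hVφ : V ⊆ φ ⁻¹' {i₁}) (hVξ : V ⊆ ξ ⁻¹' {j₁})
    (hWφ : W ⊆ φ ⁻¹' {i₂}) (hWξ : W ⊆ ξ ⁻¹' {j₁})
    (hγ : ∀ ω, γ ω = (exch i₁ i₂ j₁ j₂ (φ ω, ξ ω)).2) :
    incr I V W i₁ i₂ φ = incr I V W j₁ j₂ γ := by
  classical
  set φ' : Ω → ι := fun ω => (exch i₁ i₂ j₁ j₂ (φ ω, ξ ω)).1 with hφ'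
  have he : ∀ ω, (φ' ω, γ ω) = exch i₁ i₂ j₁ j₂ (φ ω, ξ ω) := fun ω => by rw [hγ]
  obtain ⟨hmφ', hmγ, hind', -⟩ := exch_law hφ hξ h hr φ' γ he
  have hdVW : ∀ ω, ω ∈ V → ω ∉ W := fun ω h1 h2 => hi (by
    have a := hVφ h1; have b := hWφ h2
    simp only [Set.mem_preimage, Set.mem_singleton_iff] at a b
    rw [← a, ← b])
  have e11 : exch i₁ i₂ j₁ j₂ (i₁, j₁) = (i₁, j₁) := by
    unfold exch
    rw [Equiv.swap_apply_of_ne_of_ne] <;> simp [hi, hj]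
  have e21 : exch i₁ i₂ j₁ j₂ (i₂, j₁) = (i₁, j₂) := by simp [exch]
  have vV : ∀ ω ∈ V, φ ω = i₁ ∧ ξ ω = j₁ ∧ φ' ω = i₁ ∧ γ ω = j₁ := by
    intro ω hω
    have a : φ ω = i₁ := hVφ hω
    have b : ξ ω = j₁ := hVξ hω
    have c := he ω
    rw [a, b, e11, Prod.mk.injEq] at c
    exact ⟨a, b, c⟩
  have vW : ∀ ω ∈ W, φ ω = i₂ ∧ ξ ω = j₁ ∧ φ' ω = i₁ ∧ γ ω = j₂ := by
    intro ω hω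
    have a : φ ω = i₂ := hWφ hω
    have b : ξ ω = j₁ := hWξ hω
    have c := he ω
    rw [a, b, e21, Prod.mk.injEq] at c
    exact ⟨a, b, c⟩
  have hVγ : V ⊆ γ ⁻¹' {j₁} := fun ω hω => (vV ω hω).2.2.2
  have hWγ : W ⊆ γ ⁻¹' {j₂} := fun ω hω => (vW ω hω).2.2.2
  have p1 : pairLab (swapLab V W i₁ i₂ φ) ξ =
      swapLab V W (i₁, j₁) (i₂, j₁) (pairLab φ ξ) := by
    ext1 ω
    have := vV ω
    have := vW ω
    simp only [pairLab, swapLab]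
    split_ifs <;> grind
  have p2 : pairLab φ' (swapLab V W j₁ j₂ γ) =
      swapLab V W (i₁, j₁) (i₁, j₂) (pairLab φ' γ) := by
    ext1 ω
    have := vV ω
    have := vW ω
    simp only [pairLab, swapLab]
    split_ifs <;> grind
  have i1 : IndepLab P (swapLab V W i₁ i₂ φ) ξ := by
    intro i j
    rw [p1, law_swapLab _ hV hW _ _ hVW, law_swapLab hi hV hW hVφ hWφ hVW, h]
    · simp [hi]
    · intro ω hω; have := vV ω hω; simp [pairLab, this]
    · intro ω hω; have := vW ω hω; simp [pairLab, this]
  have i2 : IndepLab P φ' (swapLab V W j₁ j₂ γ) := by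
    intro i j
    rw [p2, law_swapLab _ hV hW _ _ hVW, law_swapLab hj hV hW hVγ hWγ hVW, hind']
    · simp [hj]
    · intro ω hω; have := vV ω hω; simp [pairLab, this]
    · intro ω hω; have := vW ω hω; simp [pairLab, this]
  have q1 : part (pairLab φ' γ) = part (pairLab φ ξ) :=
    part_equiv _ _ (exch i₁ i₂ j₁ j₂) he
  have q2 : part (pairLab φ' (swapLab V W j₁ j₂ γ)) = part (pairLab (swapLab V W i₁ i₂ φ) ξ) := by
    refine part_equiv _ _ (exch i₁ i₂ j₁ j₂) fun ω => ?_
    have hv := vV ω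
    have hw := vW ω
    have := hdVW ω
    simp only [pairLab, swapLab]
    split_ifs with c1 c2
    · obtain ⟨-, b, c, -⟩ := hv c1
      rw [b, c, e21]
    · obtain ⟨-, b, c, -⟩ := hw c2
      rw [b, c, e11]
    · exact he ω
  have r1 := h.entropy hAPE hφ hξ
  have r2 := hind'.entropy hAPE hmφ' hmγ
  have r3 := i1.entropy hAPE (hφ.swapLab hi hV hW hVφ hWφ) hξ
  have r4 := i2.entropy hAPE hmφ' (hmγ.swapLab hj hV hW hVγ hWγ)
  rw [q1] at r2
  rw [q2] at r4
  unfold incr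
  linarith

lemma exch_snd {ι κ : Type*} [DecidableEq ι] [DecidableEq κ] (i₁ i₂ : ι) (j₁ j₂ : κ) (i : ι)
    (j : κ) : (exch i₁ i₂ j₁ j₂ (i, j)).2 =
      if i = i₁ ∧ j = j₂ then j₁ else if i = i₂ ∧ j = j₁ then j₂ else j := by
  simp only [exch, Equiv.swap_apply_def, Prod.mk.injEq]
  split_ifs <;> rfl

/-! ### Independent labellings and the reduction to three atoms -/

/-- A form of the Darboux property with a prescribed subset `L`; it covers null sets and both
end values of `t`. -/
lemma Darboux.exists_between {P : Measure Ω} [IsProbabilityMeasure P] (hD : Darboux P)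
    {L U : Set Ω} (hL : MeasurableSet L) (hU : MeasurableSet U) (hLU : L ⊆ U) {t : ℝ}
    (h1 : P.real L ≤ t) (h2 : t ≤ P.real U) :
    ∃ S, MeasurableSet S ∧ L ⊆ S ∧ S ⊆ U ∧ P.real S = t := by
  rcases h1.eq_or_lt with h1 | h1
  · exact ⟨L, hL, subset_rfl, hLU, h1⟩
  rcases h2.eq_or_lt with h2 | h2
  · exact ⟨U, hU, hLU, subset_rfl, h2.symm⟩
  obtain ⟨B, hB, hBU, hPB⟩ := hD (U \ L) (hU.diff hL) (ENNReal.ofReal (t - P.real L))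
    (by simpa using h1) (by
      rw [ENNReal.ofReal_lt_iff_lt_toReal (by linarith) (measure_ne_top _ _)]
      change _ < P.real _
      rw [measureReal_sdiff hLU hL]
      linarith)
  refine ⟨L ∪ B, hL.union hB, Set.subset_union_left,
    Set.union_subset hLU (hBU.trans Set.sdiff_subset), ?_⟩
  rw [measureReal_union (Set.disjoint_sdiff_right.mono_right hBU) hB]
  simp only [Measure.real, hPB] at *
  rw [ENNReal.toReal_ofReal (by linarith)]
  ring

/-- For a three-valued `ξ`, the cells of two values determine the law of `ξ` and independence:
the third value is obtained by complementation. -/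
lemma indepLab_fin_three {ι : Type*} [Fintype ι] {P : Measure Ω} [IsProbabilityMeasure P]
    {φ : Ω → ι} {ξ : Ω → Fin 3} (hφ : MeasLab φ) (hξ : MeasLab ξ) {a b : ℝ}
    (h0 : ∀ i, P.real (pairLab φ ξ ⁻¹' {(i, 0)}) = a * P.real (φ ⁻¹' {i}))
    (h1 : ∀ i, P.real (pairLab φ ξ ⁻¹' {(i, 1)}) = b * P.real (φ ⁻¹' {i})) :
    IndepLab P φ ξ ∧ P.real (ξ ⁻¹' {0}) = a ∧ P.real (ξ ⁻¹' {1}) = b := by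
  have s0 : P.real (ξ ⁻¹' {0}) = a := by
    rw [← sum_pair_right hφ hξ, Finset.sum_congr rfl fun i _ => h0 i, ← Finset.mul_sum,
      sum_law hφ, mul_one]
  have s1 : P.real (ξ ⁻¹' {1}) = b := by
    rw [← sum_pair_right hφ hξ, Finset.sum_congr rfl fun i _ => h1 i, ← Finset.mul_sum,
      sum_law hφ, mul_one]
  have s2 := sum_law (P := P) hξ
  rw [Fin.sum_univ_three, s0, s1] at s2
  refine ⟨fun i j => ?_, s0, s1⟩
  have h2 := sum_pair_left (P := P) hφ hξ i
  rw [Fin.sum_univ_three, h0, h1] at h2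
  fin_cases j
  · simp only [Fin.zero_eta]
    rw [h0, s0, mul_comm]
  · simp only [Fin.mk_one]
    rw [h1, s1, mul_comm]
  · simp only [Fin.reduceFinMk]
    rw [show P.real (ξ ⁻¹' {2}) = 1 - a - b by linarith]
    linarith

open Classical in
/-- The labelling with value `0` on `S`, `1` on `T ∖ S` and `2` elsewhere. -/
noncomputable def triLab (S T : Set Ω) : Ω → Fin 3 :=
  fun ω => if ω ∈ S then 0 else if ω ∈ T then 1 else 2

omit [MeasurableSpace Ω] in
lemma triLab_zero (S T : Set Ω) : triLab S T ⁻¹' {0} = S := by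
  ext ω
  simp only [triLab, Set.mem_preimage, Set.mem_singleton_iff]
  split_ifs <;> simp_all

omit [MeasurableSpace Ω] in
lemma triLab_one {S T : Set Ω} (h : Disjoint S T) : triLab S T ⁻¹' {1} = T := by
  ext ω
  have h' : ω ∈ S → ω ∉ T := fun hS => Set.disjoint_left.1 h hS
  simp only [triLab, Set.mem_preimage, Set.mem_singleton_iff]
  split_ifs <;> simp_all

omit [MeasurableSpace Ω] in
lemma triLab_ne_two {S T : Set Ω} {ω : Ω} (h : triLab S T ω ≠ 2) : ω ∈ S ∨ ω ∈ T := by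
  simp only [triLab] at h
  split_ifs at h <;> simp_all

lemma measLab_triLab {S T : Set Ω} (hS : MeasurableSet S) (hT : MeasurableSet T)
    (h : Disjoint S T) : MeasLab (triLab S T) := by
  intro j
  fin_cases j
  · simpa [triLab_zero] using hS
  · simpa [triLab_one h] using hT
  · have : triLab S T ⁻¹' {2} = (S ∪ T)ᶜ := by
      ext ω
      simp only [triLab, Set.mem_preimage, Set.mem_singleton_iff]
      split_ifs <;> simp_all
    simp only [Fin.reduceFinMk]
    rw [this]
    exact (hS.union hT).compl

/-- A labelling independent of `φ`, with prescribed law, equal to `0` on `L` and equal to `2` on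
`Z ∖ L`, provided that every atom of positive measure leaves enough room outside `Z`. -/
lemma exists_indep {ι : Type*} [Fintype ι] {P : Measure Ω} [IsProbabilityMeasure P]
    (hD : Darboux P) {φ : Ω → ι} (hφ : MeasLab φ) {L Z : Set Ω} (hL : MeasurableSet L)
    (hZ : MeasurableSet Z) {a b : ℝ} (hb : 0 ≤ b)
    (hLa : ∀ i, P.real (φ ⁻¹' {i} ∩ L) ≤ a * P.real (φ ⁻¹' {i}))
    (hroom : ∀ i, P.real (φ ⁻¹' {i}) = 0 ∨
      (a + b) * P.real (φ ⁻¹' {i}) ≤ P.real (φ ⁻¹' {i}) - P.real Z) :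
    ∃ ξ : Ω → Fin 3, MeasLab ξ ∧ IndepLab P φ ξ ∧ P.real (ξ ⁻¹' {0}) = a ∧
      P.real (ξ ⁻¹' {1}) = b ∧ L ⊆ ξ ⁻¹' {0} ∧ ∀ ω, ξ ω ≠ 2 → ω ∈ Z → ω ∈ L := by
  have key : ∀ i, ∃ S T : Set Ω, MeasurableSet S ∧ MeasurableSet T ∧
      S ⊆ φ ⁻¹' {i} ∧ T ⊆ φ ⁻¹' {i} ∧ Disjoint S T ∧ φ ⁻¹' {i} ∩ L ⊆ S ∧
      (∀ ω ∈ S ∪ T, ω ∈ Z → ω ∈ L) ∧ P.real S = a * P.real (φ ⁻¹' {i}) ∧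
      P.real T = b * P.real (φ ⁻¹' {i}) := by
    intro i
    have hA := hφ i
    set A := φ ⁻¹' {i}
    have hp : 0 ≤ P.real A := measureReal_nonneg
    have hz : P.real A - P.real Z ≤ P.real (A \ Z) := le_measureReal_sdiff
    have hz0 : 0 ≤ P.real (A \ Z) := measureReal_nonneg
    have hroom' : (a + b) * P.real A ≤ P.real (A \ Z) := by
      rcases hroom i with h | h
      · rw [h, mul_zero]; exact hz0
      · exact h.trans hz
    have hbp : 0 ≤ b * P.real A := mul_nonneg hb hp
    obtain ⟨S, hS, hLS, hSU, hPS⟩ := hD.exists_between (hA.inter hL)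
      ((hA.diff hZ).union (hA.inter hL)) Set.subset_union_right (hLa i) (by
        have : P.real (A \ Z) ≤ P.real (A \ Z ∪ A ∩ L) := measureReal_mono Set.subset_union_left
        nlinarith)
    have hT2 : P.real (A \ Z) - P.real S ≤ P.real ((A \ Z) \ S) := le_measureReal_sdiff
    obtain ⟨T, hT, -, hTU, hPT⟩ := hD.exists_between (t := b * P.real A) MeasurableSet.empty
      ((hA.diff hZ).diff hS) (Set.empty_subset _) (by simpa using hbp) (by nlinarith)
    refine ⟨S, T, hS, hT, ?_, ?_, ?_, hLS, ?_, hPS, hPT⟩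
    · exact hSU.trans (Set.union_subset Set.sdiff_subset Set.inter_subset_left)
    · exact hTU.trans (Set.sdiff_subset.trans Set.sdiff_subset)
    · exact Set.disjoint_sdiff_right.mono_right hTU
    · rintro ω (h | h) hωZ
      · rcases hSU h with h | h
        · exact absurd hωZ h.2
        · exact h.2
      · exact absurd hωZ (hTU h).1.2
  choose S T hS hT hSA hTA hST hLS hav hPS hPT using key
  have hdisj : Disjoint (⋃ i, S i) (⋃ i, T i) := by
    rw [Set.disjoint_left]
    intro ω h1 h2
    obtain ⟨i, hi⟩ := Set.mem_iUnion.1 h1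
    obtain ⟨j, hj⟩ := Set.mem_iUnion.1 h2
    have e1 : φ ω = i := hSA i hi
    have e2 : φ ω = j := hTA j hj
    rw [e1] at e2
    subst e2
    exact Set.disjoint_left.1 (hST i) hi hj
  have hmS : MeasurableSet (⋃ i, S i) := MeasurableSet.iUnion hS
  have hmT : MeasurableSet (⋃ i, T i) := MeasurableSet.iUnion hT
  have hξ := measLab_triLab hmS hmT hdisj
  have cell : ∀ (X : ι → Set Ω), (∀ i, X i ⊆ φ ⁻¹' {i}) → ∀ i,
      φ ⁻¹' {i} ∩ ⋃ i, X i = X i := by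
    intro X hX i
    ext ω
    constructor
    · rintro ⟨h1, h2⟩
      obtain ⟨j, hj⟩ := Set.mem_iUnion.1 h2
      have e1 : φ ω = i := h1
      have e2 : φ ω = j := hX j hj
      rw [e1] at e2
      rwa [e2]
    · exact fun h => ⟨hX i h, Set.mem_iUnion.2 ⟨i, h⟩⟩
  obtain ⟨h1, h2, h3⟩ := indepLab_fin_three (P := P) (a := a) (b := b) hφ hξ
    (fun i => by rw [pairLab_preimage, triLab_zero, cell S hSA, hPS])
    (fun i => by rw [pairLab_preimage, triLab_one hdisj, cell T hTA, hPT])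
  refine ⟨_, hξ, h1, h2, h3, ?_, ?_⟩
  · rw [triLab_zero]
    exact fun ω hω => Set.mem_iUnion.2 ⟨φ ω, hLS _ ⟨rfl, hω⟩⟩
  · intro ω h hωZ
    rcases triLab_ne_two h with h | h
    · obtain ⟨i, hi⟩ := Set.mem_iUnion.1 h
      exact hav i ω (Or.inl hi) hωZ
    · obtain ⟨i, hi⟩ := Set.mem_iUnion.1 h
      exact hav i ω (Or.inr hi) hωZ

/-- A three-atom labelling whose atoms `0 ⊇ V` and `1 ⊇ W` have measures `d` and `lam * d`. -/
structure Tri (P : Measure Ω) (d lam : ℝ) (V W : Set Ω) (γ : Ω → Fin 3) : Prop where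
  meas : MeasLab γ
  law0 : P.real (γ ⁻¹' {0}) = d
  law1 : P.real (γ ⁻¹' {1}) = lam * d
  sub0 : V ⊆ γ ⁻¹' {0}
  sub1 : W ⊆ γ ⁻¹' {1}

/-- Every increment equals that of a three-atom labelling of the above kind, with `d` small at
choice; moreover its two small atoms can be made to avoid `Z` outside `V ∪ W`. -/
lemma exists_tri {ι : Type*} [Fintype ι] {P : Measure Ω} [IsProbabilityMeasure P]
    (hD : Darboux P) {I : Finset (Set Ω) → ℝ} (hAPE : IsAPE P I)
    {φ : Ω → ι} (hφ : MeasLab φ) {V W Z : Set Ω} (hV : MeasurableSet V)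
    (hW : MeasurableSet W) (hVW : P.real V = P.real W) (hZ : MeasurableSet Z)
    {i₁ i₂ : ι} (hi : i₁ ≠ i₂) (hVφ : V ⊆ φ ⁻¹' {i₁}) (hWφ : W ⊆ φ ⁻¹' {i₂})
    {d lam : ℝ} (hd : 0 < d) (hlam : 0 < lam)
    (hratio : P.real (φ ⁻¹' {i₂}) = lam * P.real (φ ⁻¹' {i₁}))
    (hv1 : P.real V ≤ d * P.real (φ ⁻¹' {i₁})) (hv2 : P.real V ≤ d * P.real (φ ⁻¹' {i₂}))
    (hroom : ∀ i, P.real (φ ⁻¹' {i}) = 0 ∨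
      (d + lam * d) * P.real (φ ⁻¹' {i}) ≤ P.real (φ ⁻¹' {i}) - P.real Z) :
    ∃ γ : Ω → Fin 3, Tri P d lam V W γ ∧ (∀ ω, γ ω ≠ 2 → ω ∈ Z → ω ∈ V ∪ W) ∧
      incr I V W i₁ i₂ φ = incr I V W 0 1 γ := by
  classical
  obtain ⟨ξ, hξ, hind, l0, l1, hsub, hav⟩ := exists_indep hD hφ (hV.union hW) hZ
    (mul_pos hlam hd).le (by
      intro i
      by_cases c1 : i = i₁
      · subst c1
        refine le_trans (measureReal_mono ?_) hv1
        rintro ω ⟨h1, h2 | h2⟩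
        · exact h2
        · have e1 : φ ω = i := h1
          have e2 : φ ω = i₂ := hWφ h2
          exact absurd (e1.symm.trans e2) hi
      by_cases c2 : i = i₂
      · subst c2
        refine le_trans (measureReal_mono ?_) (hVW ▸ hv2)
        rintro ω ⟨h1, h2 | h2⟩
        · have e1 : φ ω = i := h1
          have e2 : φ ω = i₁ := hVφ h2
          exact absurd (e2.symm.trans e1) hi
        · exact h2
      have : φ ⁻¹' {i} ∩ (V ∪ W) = ∅ := by
        rw [Set.eq_empty_iff_forall_notMem]
        rintro ω ⟨h1, h2 | h2⟩
        · have e1 : φ ω = i := h1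
          have e2 : φ ω = i₁ := hVφ h2
          exact c1 (e1.symm.trans e2)
        · have e1 : φ ω = i := h1
          have e2 : φ ω = i₂ := hWφ h2
          exact c2 (e1.symm.trans e2)
      rw [this, measureReal_empty]
      exact mul_nonneg hd.le measureReal_nonneg) hroom
  have hr : P.real (φ ⁻¹' {i₁}) * P.real (ξ ⁻¹' {1}) =
      P.real (φ ⁻¹' {i₂}) * P.real (ξ ⁻¹' {0}) := by
    rw [l0, l1, hratio]; ring
  have hj : (0 : Fin 3) ≠ 1 := by decide
  set γ : Ω → Fin 3 := fun ω => (exch i₁ i₂ 0 1 (φ ω, ξ ω)).2 with hγ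
  have hγ' : ∀ ω, γ ω = if φ ω = i₁ ∧ ξ ω = 1 then 0 else
      if φ ω = i₂ ∧ ξ ω = 0 then 1 else ξ ω := fun ω => exch_snd _ _ _ _ _ _
  obtain ⟨-, hmγ, -, hlaw⟩ := exch_law hφ hξ hind hr
    (fun ω => (exch i₁ i₂ 0 1 (φ ω, ξ ω)).1) γ (fun ω => rfl)
  refine ⟨γ, ⟨hmγ, by rw [hlaw, l0], by rw [hlaw, l1], ?_, ?_⟩, ?_, ?_⟩
  · intro ω hω
    have e1 : φ ω = i₁ := hVφ hω
    have e2 : ξ ω = 0 := hsub (Or.inl hω)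
    simp [hγ', e1, e2, hi]
  · intro ω hω
    have e1 : φ ω = i₂ := hWφ hω
    have e2 : ξ ω = 0 := hsub (Or.inr hω)
    simp [hγ', e1, e2]
  · intro ω h hωZ
    refine hav ω (fun h2 => h ?_) hωZ
    rw [hγ', h2]
    simp
  · exact incr_exch hAPE hφ hξ hind hi hj hr hV hW hVW hVφ
      (fun ω h => hsub (Or.inl h)) hWφ (fun ω h => hsub (Or.inr h)) fun ω => rfl

/-! ### Comparison of three-atom partitions -/

/-- The transfer principle with a prescribed result: the overlaps of `γ` and `τ` listed here are
exactly those for which `τ` arises from `γ` by exchanging two cells of the join with a suitable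
independent three-valued labelling `ξ`. -/
lemma incr_tri_eq_target {P : Measure Ω} [IsProbabilityMeasure P]
    (hD : Darboux P) {I : Finset (Set Ω) → ℝ} (hAPE : IsAPE P I) {V W : Set Ω}
    (hV : MeasurableSet V) (hW : MeasurableSet W) (hVW : P.real V = P.real W)
    {d lam : ℝ} (hd : 0 < d) (hlam : 0 < lam)
    (hv1 : P.real V ≤ d * d) (hv2 : P.real V ≤ lam * d * d)
    {γ τ : Ω → Fin 3} (hγ : Tri P d lam V W γ) (hτ : MeasLab τ)
    (hVτ : V ⊆ τ ⁻¹' {0}) (hWτ : W ⊆ τ ⁻¹' {1})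
    (h01 : ∀ ω, γ ω = 0 → τ ω ≠ 1) (h10 : ∀ ω, γ ω = 1 → τ ω ≠ 0)
    (c00 : P.real (γ ⁻¹' {0} ∩ τ ⁻¹' {0}) = (1 + lam) * d * d)
    (c11 : P.real (γ ⁻¹' {1} ∩ τ ⁻¹' {1}) = (1 + lam) * d * (lam * d))
    (c20 : P.real (γ ⁻¹' {2} ∩ τ ⁻¹' {0}) = d * (1 - d - lam * d))
    (c21 : P.real (γ ⁻¹' {2} ∩ τ ⁻¹' {1}) = lam * d * (1 - d - lam * d)) :
    incr I V W 0 1 γ = incr I V W 0 1 τ := by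
  classical
  have hld : 0 < lam * d := mul_pos hlam hd
  obtain ⟨N₁, hN₁, hVN, hN₁s, pN₁⟩ := hD.exists_between (t := d * d) hV
    ((hγ.meas 0).inter (hτ 0)) (Set.subset_inter hγ.sub0 hVτ) hv1 (by rw [c00]; nlinarith)
  obtain ⟨N₂, hN₂, hWN, hN₂s, pN₂⟩ := hD.exists_between (t := lam * d * d) hW
    ((hγ.meas 1).inter (hτ 1)) (Set.subset_inter hγ.sub1 hWτ) (hVW ▸ hv2)
    (by rw [c11]; nlinarith [mul_pos hld hld])
  -- `ξ` undoes on `τ` the exchange of the cells `(0, 1)` and `(1, 0)`: the former is the part of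
  -- `{γ = 0, τ = 0}` outside `N₁`, the latter is `N₂`.
  set ξ : Ω → Fin 3 := fun ω => if γ ω = 0 ∧ τ ω = 0 ∧ ω ∉ N₁ then 1 else
    if ω ∈ N₂ then 0 else τ ω with hξ
  have n1 : ∀ ω ∈ N₁, γ ω = 0 ∧ τ ω = 0 := fun ω h => hN₁s h
  have n2 : ∀ ω ∈ N₂, γ ω = 1 ∧ τ ω = 1 := fun ω h => hN₂s h
  have x00 : γ ⁻¹' {0} ∩ ξ ⁻¹' {0} = N₁ := by
    ext ω
    have := n1 ω; have := n2 ω; have := h01 ω; have := h10 ω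
    simp only [Set.mem_inter_iff, Set.mem_preimage, Set.mem_singleton_iff, hξ]
    split_ifs <;> grind
  have x01 : γ ⁻¹' {0} ∩ ξ ⁻¹' {1} = (γ ⁻¹' {0} ∩ τ ⁻¹' {0}) \ N₁ := by
    ext ω
    have := n1 ω; have := n2 ω; have := h01 ω; have := h10 ω
    simp only [Set.mem_inter_iff, Set.mem_sdiff, Set.mem_preimage, Set.mem_singleton_iff, hξ]
    split_ifs <;> grind
  have x10 : γ ⁻¹' {1} ∩ ξ ⁻¹' {0} = N₂ := by
    ext ω
    have := n1 ω; have := n2 ω; have := h01 ω; have := h10 ω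
    simp only [Set.mem_inter_iff, Set.mem_preimage, Set.mem_singleton_iff, hξ]
    split_ifs <;> grind
  have x11 : γ ⁻¹' {1} ∩ ξ ⁻¹' {1} = (γ ⁻¹' {1} ∩ τ ⁻¹' {1}) \ N₂ := by
    ext ω
    have := n1 ω; have := n2 ω; have := h01 ω; have := h10 ω
    simp only [Set.mem_inter_iff, Set.mem_sdiff, Set.mem_preimage, Set.mem_singleton_iff, hξ]
    split_ifs <;> grind
  have x2 : ∀ j, γ ⁻¹' {2} ∩ ξ ⁻¹' {j} = γ ⁻¹' {2} ∩ τ ⁻¹' {j} := by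
    intro j
    ext ω
    have := n1 ω; have := n2 ω; have := h01 ω; have := h10 ω
    simp only [Set.mem_inter_iff, Set.mem_preimage, Set.mem_singleton_iff, hξ]
    split_ifs <;> grind
  have hmξ : MeasLab ξ := by
    have h3 : ∀ j, ξ ⁻¹' {j} = (γ ⁻¹' {0} ∩ τ ⁻¹' {0} ∩ N₁ᶜ ∩ {_ω | j = 1}) ∪
        (N₂ ∩ {_ω | j = 0}) ∪ ((γ ⁻¹' {0} ∩ τ ⁻¹' {0} ∩ N₁ᶜ)ᶜ ∩ N₂ᶜ ∩ τ ⁻¹' {j}) := by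
      intro j
      ext ω
      have := n1 ω; have := n2 ω
      simp only [Set.mem_inter_iff, Set.mem_union, Set.mem_compl_iff, Set.mem_ofPred_eq,
        Set.mem_preimage, Set.mem_singleton_iff, hξ]
      split_ifs <;> grind
    intro j
    rw [h3]
    have m := ((hγ.meas 0).inter (hτ 0)).inter hN₁.compl
    exact ((m.inter (MeasurableSet.const _)).union (hN₂.inter (MeasurableSet.const _))).union
      ((m.compl.inter hN₂.compl).inter (hτ j))
  have g2 := sum_law (P := P) hγ.meas
  rw [Fin.sum_univ_three, hγ.law0, hγ.law1] at g2
  obtain ⟨hind, l0, l1⟩ := indepLab_fin_three (P := P) (a := d) (b := lam * d) hγ.meas hmξ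
    (by
      intro i
      rw [pairLab_preimage]
      fin_cases i
      · simp only [Fin.zero_eta]
        rw [x00, pN₁, hγ.law0]
      · simp only [Fin.mk_one]
        rw [x10, pN₂, hγ.law1]; ring
      · simp only [Fin.reduceFinMk]
        rw [x2, c20, show P.real (γ ⁻¹' {2}) = 1 - d - lam * d by linarith])
    (by
      intro i
      rw [pairLab_preimage]
      fin_cases i
      · simp only [Fin.zero_eta]
        rw [x01, measureReal_sdiff hN₁s hN₁, pN₁, c00, hγ.law0]; ring
      · simp only [Fin.mk_one]
        rw [x11, measureReal_sdiff hN₂s hN₂, pN₂, c11, hγ.law1]; ring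
      · simp only [Fin.reduceFinMk]
        rw [x2, c21, show P.real (γ ⁻¹' {2}) = 1 - d - lam * d by linarith])
  have hj : (0 : Fin 3) ≠ 1 := by decide
  refine incr_exch hAPE hγ.meas hmξ hind hj hj ?_ hV hW hVW hγ.sub0 ?_ hγ.sub1 ?_ ?_
  · rw [l0, l1, hγ.law0, hγ.law1]; ring
  · intro ω hω
    have : ω ∈ N₁ := hVN hω
    rw [← x00] at this
    exact this.2
  · intro ω hω
    have : ω ∈ N₂ := hWN hω
    rw [← x10] at this
    exact this.2
  · intro ω
    have := n1 ω; have := n2 ω; have := h01 ω; have := h10 ω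
    rw [exch_snd]
    simp only [hξ]
    split_ifs <;> grind

/-- A target reachable from `γ`, built symmetrically in `γ` and `γ'`: its atom `0` consists of `V`,
pieces `N₀` and `N₀'` of the atoms `0` of `γ` and of `γ'`, and a piece `M₀` of the common atom `2`;
similarly for its atom `1`. -/
lemma incr_tri_eq_explicit {P : Measure Ω} [IsProbabilityMeasure P]
    (hD : Darboux P) {I : Finset (Set Ω) → ℝ} (hAPE : IsAPE P I) {V W : Set Ω}
    (hV : MeasurableSet V) (hW : MeasurableSet W) (hVW : P.real V = P.real W)
    {d lam : ℝ} (hd : 0 < d) (hlam : 0 < lam)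
    (hv1 : P.real V ≤ d * d) (hv2 : P.real V ≤ lam * d * d)
    {γ γ' : Ω → Fin 3} (hγ : Tri P d lam V W γ) (hγ' : Tri P d lam V W γ')
    (hav : ∀ ω, γ ω ≠ 2 → γ' ω ≠ 2 → ω ∈ V ∪ W)
    {N₀ N₀' N₁ N₁' M₀ M₁ : Set Ω}
    (mN₀ : MeasurableSet N₀) (mN₀' : MeasurableSet N₀') (mN₁ : MeasurableSet N₁)
    (mN₁' : MeasurableSet N₁') (mM₀ : MeasurableSet M₀) (mM₁ : MeasurableSet M₁)
    (sN₀ : N₀ ⊆ γ ⁻¹' {0} \ V) (sN₀' : N₀' ⊆ γ' ⁻¹' {0} \ V)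
    (sN₁ : N₁ ⊆ γ ⁻¹' {1} \ W) (sN₁' : N₁' ⊆ γ' ⁻¹' {1} \ W)
    (sM₀ : M₀ ⊆ γ ⁻¹' {2} ∩ γ' ⁻¹' {2}) (sM₁ : M₁ ⊆ (γ ⁻¹' {2} ∩ γ' ⁻¹' {2}) \ M₀)
    (pN₀ : P.real N₀ = (1 + lam) * d * d - P.real V)
    (pN₀' : P.real N₀' = (1 + lam) * d * d - P.real V)
    (pN₁ : P.real N₁ = (1 + lam) * d * (lam * d) - P.real V)
    (pN₁' : P.real N₁' = (1 + lam) * d * (lam * d) - P.real V)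
    (pM₀ : P.real M₀ = d * (1 - d - lam * d) - ((1 + lam) * d * d - P.real V))
    (pM₁ : P.real M₁ = lam * d * (1 - d - lam * d) - ((1 + lam) * d * (lam * d) - P.real V)) :
    incr I V W 0 1 γ = incr I V W 0 1 (triLab (V ∪ (N₀ ∪ N₀') ∪ M₀) (W ∪ (N₁ ∪ N₁') ∪ M₁)) := by
  have fV : ∀ ω ∈ V, γ ω = 0 ∧ γ' ω = 0 := fun ω h => ⟨hγ.sub0 h, hγ'.sub0 h⟩
  have fW : ∀ ω ∈ W, γ ω = 1 ∧ γ' ω = 1 := fun ω h => ⟨hγ.sub1 h, hγ'.sub1 h⟩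
  have f0 : ∀ ω ∈ N₀, γ ω = 0 ∧ ω ∉ V := fun ω h => sN₀ h
  have f0' : ∀ ω ∈ N₀', γ' ω = 0 ∧ ω ∉ V := fun ω h => sN₀' h
  have f1 : ∀ ω ∈ N₁, γ ω = 1 ∧ ω ∉ W := fun ω h => sN₁ h
  have f1' : ∀ ω ∈ N₁', γ' ω = 1 ∧ ω ∉ W := fun ω h => sN₁' h
  have fM₀ : ∀ ω ∈ M₀, γ ω = 2 ∧ γ' ω = 2 := fun ω h => sM₀ h
  have fM₁ : ∀ ω ∈ M₁, (γ ω = 2 ∧ γ' ω = 2) ∧ ω ∉ M₀ := fun ω h => sM₁ h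
  simp only [Set.mem_union] at hav
  have g0' : ∀ ω ∈ N₀', γ ω = 2 := by
    intro ω h
    have := f0' ω h; have := hav ω; have := fW ω
    grind
  have g1' : ∀ ω ∈ N₁', γ ω = 2 := by
    intro ω h
    have := f1' ω h; have := hav ω; have := fV ω
    grind
  have hdisj : Disjoint (V ∪ (N₀ ∪ N₀') ∪ M₀) (W ∪ (N₁ ∪ N₁') ∪ M₁) := by
    rw [Set.disjoint_left]
    intro ω
    have := fV ω; have := fW ω; have := f0 ω; have := f0' ω; have := f1 ω; have := f1' ω
    have := fM₀ ω; have := fM₁ ω; have := g0' ω; have := g1' ω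
    simp only [Set.mem_union]
    grind
  have hmT₀ := (hV.union (mN₀.union mN₀')).union mM₀
  have hmT₁ := (hW.union (mN₁.union mN₁')).union mM₁
  have d1 : Disjoint V N₀ := Set.disjoint_sdiff_right.mono_right sN₀
  have d2 : Disjoint W N₁ := Set.disjoint_sdiff_right.mono_right sN₁
  have d3 : Disjoint N₀' M₀ := by
    rw [Set.disjoint_left]
    intro ω; have := f0' ω; have := fM₀ ω; grind
  have d4 : Disjoint N₁' M₁ := by
    rw [Set.disjoint_left]
    intro ω; have := f1' ω; have := fM₁ ω; grind
  refine incr_tri_eq_target hD hAPE hV hW hVW hd hlam hv1 hv2 hγ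
    (measLab_triLab hmT₀ hmT₁ hdisj) ?_ ?_ ?_ ?_ ?_ ?_ ?_ ?_
  · rw [triLab_zero]
    exact fun ω h => Or.inl (Or.inl h)
  · rw [triLab_one hdisj]
    exact fun ω h => Or.inl (Or.inl h)
  · intro ω hω h
    have h : ω ∈ triLab _ _ ⁻¹' {1} := h
    rw [triLab_one hdisj] at h
    simp only [Set.mem_union] at h
    have := fW ω; have := f1 ω; have := g1' ω; have := fM₁ ω
    grind
  · intro ω hω h
    have h : ω ∈ triLab _ _ ⁻¹' {0} := h
    rw [triLab_zero] at h
    simp only [Set.mem_union] at h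
    have := fV ω; have := f0 ω; have := g0' ω; have := fM₀ ω
    grind
  · rw [triLab_zero]
    have : γ ⁻¹' {0} ∩ (V ∪ (N₀ ∪ N₀') ∪ M₀) = V ∪ N₀ := by
      ext ω
      have := fV ω; have := f0 ω; have := g0' ω; have := fM₀ ω
      simp only [Set.mem_inter_iff, Set.mem_union, Set.mem_preimage, Set.mem_singleton_iff]
      grind
    rw [this, measureReal_union d1 mN₀, pN₀]; ring
  · rw [triLab_one hdisj]
    have : γ ⁻¹' {1} ∩ (W ∪ (N₁ ∪ N₁') ∪ M₁) = W ∪ N₁ := by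
      ext ω
      have := fW ω; have := f1 ω; have := g1' ω; have := fM₁ ω
      simp only [Set.mem_inter_iff, Set.mem_union, Set.mem_preimage, Set.mem_singleton_iff]
      grind
    rw [this, measureReal_union d2 mN₁, pN₁, hVW]; ring
  · rw [triLab_zero]
    have : γ ⁻¹' {2} ∩ (V ∪ (N₀ ∪ N₀') ∪ M₀) = N₀' ∪ M₀ := by
      ext ω
      have := fV ω; have := f0 ω; have := g0' ω; have := fM₀ ω
      simp only [Set.mem_inter_iff, Set.mem_union, Set.mem_preimage, Set.mem_singleton_iff]
      grind
    rw [this, measureReal_union d3 mM₀, pN₀', pM₀]; ring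
  · rw [triLab_one hdisj]
    have : γ ⁻¹' {2} ∩ (W ∪ (N₁ ∪ N₁') ∪ M₁) = N₁' ∪ M₁ := by
      ext ω
      have := fW ω; have := f1 ω; have := g1' ω; have := fM₁ ω
      simp only [Set.mem_inter_iff, Set.mem_union, Set.mem_preimage, Set.mem_singleton_iff]
      grind
    rw [this, measureReal_union d4 mM₁, pN₁', pM₁]; ring

/-- Two three-atom labellings with the same `d`, whose small atoms meet only in `V ∪ W`, have a
common target. -/
lemma incr_tri_eq {P : Measure Ω} [IsProbabilityMeasure P]
    (hD : Darboux P) {I : Finset (Set Ω) → ℝ} (hAPE : IsAPE P I) {V W : Set Ω}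
    (hV : MeasurableSet V) (hW : MeasurableSet W) (hVW : P.real V = P.real W)
    {d lam : ℝ} (hd : 0 < d) (hlam : 0 < lam) (hsd : (1 + lam) * d ≤ 1 / 8)
    (hv1 : P.real V ≤ d * d) (hv2 : P.real V ≤ lam * d * d)
    {γ γ' : Ω → Fin 3} (hγ : Tri P d lam V W γ) (hγ' : Tri P d lam V W γ')
    (hav : ∀ ω, γ ω ≠ 2 → γ' ω ≠ 2 → ω ∈ V ∪ W) :
    incr I V W 0 1 γ = incr I V W 0 1 γ' := by
  have hld : 0 < lam * d := mul_pos hlam hd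
  have hd8 : d ≤ 1 / 8 := by nlinarith
  have hld8 : lam * d ≤ 1 / 8 := by nlinarith
  have hv0 : 0 ≤ P.real V := measureReal_nonneg
  have e1 : 0 < d * d := mul_pos hd hd
  have e2 : 0 < lam * d * d := mul_pos hld hd
  have e3 : 0 < lam * d * (lam * d) := mul_pos hld hld
  have s1 : (1 + lam) * d * d ≤ 1 / 8 * d := mul_le_mul_of_nonneg_right hsd hd.le
  have s2 : (1 + lam) * d * (lam * d) ≤ 1 / 8 * (lam * d) :=
    mul_le_mul_of_nonneg_right hsd hld.le
  have pick : ∀ U : Set Ω, MeasurableSet U → ∀ t : ℝ, 0 ≤ t → t ≤ P.real U →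
      ∃ S, MeasurableSet S ∧ S ⊆ U ∧ P.real S = t := by
    intro U hU t h0 h1
    obtain ⟨S, hS, -, hSU, hP⟩ :=
      hD.exists_between MeasurableSet.empty hU (Set.empty_subset _) (by simpa using h0) h1
    exact ⟨S, hS, hSU, hP⟩
  have pick0 : ∀ γ : Ω → Fin 3, Tri P d lam V W γ → ∃ S, MeasurableSet S ∧
      S ⊆ γ ⁻¹' {0} \ V ∧ P.real S = (1 + lam) * d * d - P.real V := by
    intro γ hγ
    refine pick _ ((hγ.meas 0).diff hV) _ (by nlinarith) ?_
    rw [measureReal_sdiff hγ.sub0 hV, hγ.law0]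
    linarith
  have pick1 : ∀ γ : Ω → Fin 3, Tri P d lam V W γ → ∃ S, MeasurableSet S ∧
      S ⊆ γ ⁻¹' {1} \ W ∧ P.real S = (1 + lam) * d * (lam * d) - P.real V := by
    intro γ hγ
    refine pick _ ((hγ.meas 1).diff hW) _ (by nlinarith) ?_
    rw [measureReal_sdiff hγ.sub1 hW, hγ.law1, ← hVW]
    linarith
  obtain ⟨N₀, mN₀, sN₀, pN₀⟩ := pick0 γ hγ
  obtain ⟨N₀', mN₀', sN₀', pN₀'⟩ := pick0 γ' hγ'
  obtain ⟨N₁, mN₁, sN₁, pN₁⟩ := pick1 γ hγ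
  obtain ⟨N₁', mN₁', sN₁', pN₁'⟩ := pick1 γ' hγ'
  have mQ : MeasurableSet (γ ⁻¹' {2} ∩ γ' ⁻¹' {2}) := (hγ.meas 2).inter (hγ'.meas 2)
  have hQ : 3 / 4 ≤ P.real (γ ⁻¹' {2} ∩ γ' ⁻¹' {2}) := by
    have g := sum_law (P := P) hγ.meas
    have g' := sum_law (P := P) hγ'.meas
    rw [Fin.sum_univ_three, hγ.law0, hγ.law1] at g
    rw [Fin.sum_univ_three, hγ'.law0, hγ'.law1] at g'
    have h1 := measureReal_union_add_inter (μ := P) (s := γ ⁻¹' {2}) (hγ'.meas 2)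
    have h2 : P.real (γ ⁻¹' {2} ∪ γ' ⁻¹' {2}) ≤ 1 := measureReal_le_one
    linarith
  have t1 : d * (1 - d - lam * d) ≤ d := by nlinarith
  have t2 : lam * d * (1 - d - lam * d) ≤ lam * d := by nlinarith
  have t3 : 7 / 8 * d ≤ d * (1 - d - lam * d) := by nlinarith
  have t4 : 7 / 8 * (lam * d) ≤ lam * d * (1 - d - lam * d) := by nlinarith
  obtain ⟨M₀, mM₀, sM₀, pM₀⟩ := pick _ mQ
    (d * (1 - d - lam * d) - ((1 + lam) * d * d - P.real V)) (by linarith) (by nlinarith)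
  obtain ⟨M₁, mM₁, sM₁, pM₁⟩ := pick _ (mQ.diff mM₀)
    (lam * d * (1 - d - lam * d) - ((1 + lam) * d * (lam * d) - P.real V)) (by linarith) (by
      rw [measureReal_sdiff sM₀ mM₀, pM₀]
      nlinarith)
  have r1 := incr_tri_eq_explicit hD hAPE hV hW hVW hd hlam hv1 hv2 hγ hγ' hav mN₀ mN₀' mN₁ mN₁'
    mM₀ mM₁ sN₀ sN₀' sN₁ sN₁' sM₀ sM₁ pN₀ pN₀' pN₁ pN₁' pM₀ pM₁
  have r2 := incr_tri_eq_explicit hD hAPE hV hW hVW hd hlam hv1 hv2 hγ' hγ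
    (fun ω h h' => hav ω h' h) mN₀' mN₀ mN₁' mN₁ mM₀ mM₁ sN₀' sN₀ sN₁' sN₁
    (by rwa [Set.inter_comm]) (by rwa [Set.inter_comm]) pN₀' pN₀ pN₁' pN₁ pM₀ pM₁
  rw [r1, r2, Set.union_comm N₀, Set.union_comm N₁]

/-! ### Small swaps, and splitting of large swaps -/

/-- A step size `d` that is small compared with all positive atom masses. -/
lemma exists_small_step {ι κ : Type*} [Finite ι] [Finite κ] (p : ι → ℝ) (q : κ → ℝ) (c : ℝ) :
    ∃ d : ℝ, 0 < d ∧ c * d ≤ 1 / 8 ∧ (∀ i, 0 < p i → 2 * (c * d) ≤ p i) ∧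
      ∀ k, 0 < q k → 2 * (c * d) ≤ q k := by
  have key : ∀ x : ℝ, 0 < x → ∀ᶠ d in 𝓝[>] (0 : ℝ), 2 * (c * d) ≤ x := by
    intro x hx
    have : Tendsto (fun d : ℝ => 2 * (c * d)) (𝓝[>] 0) (𝓝 0) := by
      have h : Continuous fun d : ℝ => 2 * (c * d) := by fun_prop
      simpa using (h.tendsto 0).mono_left nhdsWithin_le_nhds
    exact (this.eventually_lt_const hx).mono fun d hd => hd.le
  have h0 : ∀ᶠ d in 𝓝[>] (0 : ℝ), 0 < d := eventually_mem_nhdsWithin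
  have h1 : ∀ᶠ d in 𝓝[>] (0 : ℝ), ∀ i, 0 < p i → 2 * (c * d) ≤ p i :=
    eventually_all.2 fun i => by
      by_cases h : 0 < p i
      · exact (key _ h).mono fun d hd _ => hd
      · exact Eventually.of_forall fun d h' => absurd h' h
  have h2 : ∀ᶠ d in 𝓝[>] (0 : ℝ), ∀ k, 0 < q k → 2 * (c * d) ≤ q k :=
    eventually_all.2 fun i => by
      by_cases h : 0 < q i
      · exact (key _ h).mono fun d hd _ => hd
      · exact Eventually.of_forall fun d h' => absurd h' h
  obtain ⟨d, a, b, e, f⟩ := (h0.and ((key (1 / 4) (by norm_num)).and (h1.and h2))).exists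
  exact ⟨d, a, by linarith, e, f⟩

/-- The labelling has law `p`, and its atoms `i₁` and `i₂` contain `V` and `W`.  This is stable
under swaps. -/
structure Carries {ι : Type*} (P : Measure Ω) (p : ι → ℝ) (i₁ i₂ : ι) (V W : Set Ω)
    (φ : Ω → ι) : Prop where
  meas : MeasLab φ
  law : ∀ i, P.real (φ ⁻¹' {i}) = p i
  sub₁ : V ⊆ φ ⁻¹' {i₁}
  sub₂ : W ⊆ φ ⁻¹' {i₂}

/-- The claim for swaps of small measure.  The bound `ε` depends on the labellings only through
their laws, so it stays valid after any number of swaps. -/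
lemma incr_eq_of_small {ι κ : Type*} [Fintype ι] [Fintype κ] {P : Measure Ω}
    [IsProbabilityMeasure P] (hD : Darboux P) {I : Finset (Set Ω) → ℝ} (hAPE : IsAPE P I)
    {lam : ℝ} (hlam : 0 < lam) (p : ι → ℝ) (q : κ → ℝ) {i₁ i₂ : ι} {k₁ k₂ : κ}
    (hi : i₁ ≠ i₂) (hk : k₁ ≠ k₂) (hp0 : 0 < p i₁) (hq0 : 0 < q k₁)
    (hp : p i₂ = lam * p i₁) (hq : q k₂ = lam * q k₁) :
    ∃ ε : ℝ, 0 < ε ∧ ∀ (V W : Set Ω) (φ : Ω → ι) (ψ : Ω → κ), MeasurableSet V →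
      MeasurableSet W → P.real V = P.real W → P.real V ≤ ε →
      Carries P p i₁ i₂ V W φ → Carries P q k₁ k₂ V W ψ →
      incr I V W i₁ i₂ φ = incr I V W k₁ k₂ ψ := by
  obtain ⟨d, hd, hsd, hpd, hqd⟩ := exists_small_step p q (1 + lam)
  have hld : 0 < lam * d := mul_pos hlam hd
  refine ⟨min (d * d) (lam * d * d), lt_min (mul_pos hd hd) (mul_pos hld hd), ?_⟩
  intro V W φ ψ hV hW hVW hv hφ hψ
  obtain ⟨hv1, hv2⟩ := le_min_iff.1 hv
  have hp1 : d ≤ p i₁ := by nlinarith [hpd i₁ hp0]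
  have hq1 : d ≤ q k₁ := by nlinarith [hqd k₁ hq0]
  obtain ⟨γ, hγ, -, eγ⟩ := exists_tri hD hAPE (Z := ∅) hφ.meas hV hW hVW MeasurableSet.empty hi
    hφ.sub₁ hφ.sub₂ hd hlam (by rw [hφ.law, hφ.law, hp])
    (by rw [hφ.law]; nlinarith) (by rw [hφ.law, hp]; nlinarith [mul_le_mul_of_nonneg_left hp1 hld.le])
    (fun i => Or.inr (by
      have : 0 ≤ P.real (φ ⁻¹' {i}) := measureReal_nonneg
      rw [measureReal_empty]
      nlinarith))
  have hZ : P.real (γ ⁻¹' {2})ᶜ = d + lam * d := by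
    have g := sum_law (P := P) hγ.meas
    rw [Fin.sum_univ_three, hγ.law0, hγ.law1] at g
    rw [probReal_compl_eq_one_sub (hγ.meas 2)]
    linarith
  -- The second reduction avoids the two small atoms of the first one.
  obtain ⟨γ', hγ', hav, eγ'⟩ := exists_tri hD hAPE (Z := (γ ⁻¹' {2})ᶜ) hψ.meas hV hW hVW
    (hγ.meas 2).compl hk hψ.sub₁ hψ.sub₂ hd hlam (by rw [hψ.law, hψ.law, hq])
    (by rw [hψ.law]; nlinarith) (by rw [hψ.law, hq]; nlinarith [mul_le_mul_of_nonneg_left hq1 hld.le])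
    (fun k => by
      rw [hZ, hψ.law]
      have h0 : 0 ≤ q k := hψ.law k ▸ measureReal_nonneg
      rcases h0.eq_or_lt with h | h
      · exact Or.inl h.symm
      · have := hqd k h
        right
        nlinarith)
  rw [eγ, eγ']
  exact incr_tri_eq hD hAPE hV hW hVW hd hlam hsd hv1 hv2 hγ hγ' fun ω h h' => hav ω h' h

lemma Carries.swapLab {ι : Type*} {P : Measure Ω} [IsProbabilityMeasure P] {p : ι → ℝ}
    {i₁ i₂ : ι} (hi : i₁ ≠ i₂) {V W V₁ W₁ : Set Ω} {φ : Ω → ι}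
    (h : Carries P p i₁ i₂ V W φ) (hV₁ : MeasurableSet V₁) (hW₁ : MeasurableSet W₁)
    (hVV : V₁ ⊆ V) (hWW : W₁ ⊆ W) (hVW : P.real V₁ = P.real W₁) :
    Carries P p i₁ i₂ (V \ V₁) (W \ W₁) (swapLab V₁ W₁ i₁ i₂ φ) := by
  have a := hVV.trans h.sub₁
  have b := hWW.trans h.sub₂
  refine ⟨h.meas.swapLab hi hV₁ hW₁ a b, fun i => ?_, ?_, ?_⟩
  · rw [law_swapLab hi hV₁ hW₁ a b hVW, h.law]
  · rw [swapLab_preimage_left hi a b]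
    exact fun ω hω => Or.inl ⟨h.sub₁ hω.1, hω.2⟩
  · rw [swapLab_preimage_right hi a b]
    exact fun ω hω => Or.inl ⟨h.sub₂ hω.1, hω.2⟩

omit [MeasurableSpace Ω] in
/-- A swap can be carried out in two stages. -/
lemma incr_split {ι : Type*} [Fintype ι] (I : Finset (Set Ω) → ℝ) {i₁ i₂ : ι} (hi : i₁ ≠ i₂)
    {V W V₁ W₁ : Set Ω} {φ : Ω → ι} (hVφ : V ⊆ φ ⁻¹' {i₁}) (hWφ : W ⊆ φ ⁻¹' {i₂})
    (hVV : V₁ ⊆ V) (hWW : W₁ ⊆ W) :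
    incr I V W i₁ i₂ φ = incr I V₁ W₁ i₁ i₂ φ +
      incr I (V \ V₁) (W \ W₁) i₁ i₂ (swapLab V₁ W₁ i₁ i₂ φ) := by
  have : swapLab (V \ V₁) (W \ W₁) i₁ i₂ (swapLab V₁ W₁ i₁ i₂ φ) = swapLab V W i₁ i₂ φ := by
    ext1 ω
    have a : ω ∈ V → φ ω = i₁ := fun h => hVφ h
    have b : ω ∈ W → φ ω = i₂ := fun h => hWφ h
    have c := @hVV ω
    have e := @hWW ω
    simp only [APE.swapLab, Set.mem_sdiff]
    split_ifs <;> grind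
  unfold incr
  rw [this]
  ring

/-- The claim for labellings: split off swaps of measure `ε` until a small one remains. -/
lemma incr_eq {ι κ : Type*} [Fintype ι] [Fintype κ] {P : Measure Ω}
    [IsProbabilityMeasure P] (hD : Darboux P) {I : Finset (Set Ω) → ℝ} (hAPE : IsAPE P I)
    {lam : ℝ} (hlam : 0 < lam) (p : ι → ℝ) (q : κ → ℝ) {i₁ i₂ : ι} {k₁ k₂ : κ}
    (hi : i₁ ≠ i₂) (hk : k₁ ≠ k₂) (hp0 : 0 < p i₁) (hq0 : 0 < q k₁)
    (hp : p i₂ = lam * p i₁) (hq : q k₂ = lam * q k₁)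
    (V W : Set Ω) (φ : Ω → ι) (ψ : Ω → κ) (hV : MeasurableSet V)
    (hW : MeasurableSet W) (hVW : P.real V = P.real W)
    (hφ : Carries P p i₁ i₂ V W φ) (hψ : Carries P q k₁ k₂ V W ψ) :
    incr I V W i₁ i₂ φ = incr I V W k₁ k₂ ψ := by
  obtain ⟨ε, hε, small⟩ := incr_eq_of_small (I := I) hD hAPE hlam p q hi hk hp0 hq0 hp hq
  obtain ⟨n, hn⟩ := exists_nat_ge (P.real V / ε)
  rw [div_le_iff₀ hε] at hn
  induction n generalizing V W φ ψ with
  | zero =>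
    exact small V W φ ψ hV hW hVW (hn.trans (by simpa using hε.le)) hφ hψ
  | succ n ih =>
    by_cases hv : P.real V ≤ ε
    · exact small V W φ ψ hV hW hVW hv hφ hψ
    push Not at hv
    obtain ⟨V₁, hV₁, -, sV, pV⟩ := hD.exists_between (t := ε) MeasurableSet.empty hV
      (Set.empty_subset _) (by simpa using hε.le) hv.le
    obtain ⟨W₁, hW₁, -, sW, pW⟩ := hD.exists_between (t := ε) MeasurableSet.empty hW
      (Set.empty_subset _) (by simpa using hε.le) (hVW ▸ hv.le)
    have hVW₁ : P.real V₁ = P.real W₁ := pV.trans pW.symm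
    rw [incr_split I hi hφ.sub₁ hφ.sub₂ sV sW, incr_split I hk hψ.sub₁ hψ.sub₂ sV sW]
    congr 1
    · exact small V₁ W₁ φ ψ hV₁ hW₁ hVW₁ pV.le
        ⟨hφ.meas, hφ.law, sV.trans hφ.sub₁, sW.trans hφ.sub₂⟩
        ⟨hψ.meas, hψ.law, sV.trans hψ.sub₁, sW.trans hψ.sub₂⟩
    · refine ih _ _ _ _ (hV.diff hV₁) (hW.diff hW₁) ?_
        (hφ.swapLab hi hV₁ hW₁ sV sW hVW₁) (hψ.swapLab hk hV₁ hW₁ sV sW hVW₁) ?_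
      · rw [measureReal_sdiff sV hV₁, measureReal_sdiff sW hW₁, hVW, hVW₁]
      · rw [measureReal_sdiff sV hV₁, pV]
        push_cast at hn
        linarith

/-! ### Back to partitions -/

lemma IsFinPart.exists_label {𝒜 : Finset (Set Ω)} (h : IsFinPart 𝒜) :
    ∃ φ : Ω → {A // A ∈ 𝒜}, ∀ A, φ ⁻¹' {A} = A.1 := by
  obtain ⟨-, -, hdisj, huniv⟩ := h
  have hex : ∀ ω, ∃ A : {A // A ∈ 𝒜}, ω ∈ A.1 := by
    intro ω
    have : ω ∈ ⋃₀ (𝒜 : Set (Set Ω)) := huniv ▸ Set.mem_univ ω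
    obtain ⟨A, hA, hω⟩ := this
    exact ⟨⟨A, hA⟩, hω⟩
  choose φ hφ using hex
  refine ⟨φ, fun A => ?_⟩
  ext ω
  constructor
  · rintro rfl
    exact hφ ω
  · intro hω
    by_contra hne
    exact Set.disjoint_left.1 (hdisj (φ ω).2 A.2 fun h => hne (Subtype.ext h)) (hφ ω) hω

lemma memF.exists_label {P : Measure Ω} [IsProbabilityMeasure P] {V W : Set Ω} {lam : ℝ}
    (hlam : 0 < lam) (hV : MeasurableSet V) (hW : MeasurableSet W) (hVW : P.real V = P.real W)
    {𝒜 : Finset (Set Ω)} {A₁ A₂ : Set Ω} (h : memF P V W lam 𝒜 A₁ A₂)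
    (I : Finset (Set Ω) → ℝ) :
    ∃ (φ : Ω → {A // A ∈ 𝒜}) (i₁ i₂ : {A // A ∈ 𝒜}), i₁ ≠ i₂ ∧
      0 < P.real i₁.1 ∧ P.real i₂.1 = lam * P.real i₁.1 ∧
      Carries P (fun A => P.real A.1) i₁ i₂ V W φ ∧
      incr I V W i₁ i₂ φ = I (swap V W A₁ A₂ 𝒜) - I 𝒜 := by
  classical
  obtain ⟨hpart, h1, h2, h12, hVA, hWA, hratio⟩ := h
  obtain ⟨φ, hφ⟩ := hpart.exists_label
  set i₁ : {A // A ∈ 𝒜} := ⟨A₁, h1⟩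
  set i₂ : {A // A ∈ 𝒜} := ⟨A₂, h2⟩
  have hi : i₁ ≠ i₂ := fun h => h12 (congrArg Subtype.val h)
  have hVi : V ⊆ φ ⁻¹' {i₁} := by rw [hφ]; exact hVA
  have hWi : W ⊆ φ ⁻¹' {i₂} := by rw [hφ]; exact hWA
  have hmeas : MeasLab φ := fun A => by rw [hφ]; exact hpart.1 _ A.2
  have hne : P.real A₁ ≠ 0 := by
    intro h
    change P.real A₂ / P.real A₁ = lam at hratio
    rw [h, div_zero] at hratio
    exact hlam.ne hratio
  have hpos : 0 < P.real A₁ := lt_of_le_of_ne measureReal_nonneg hne.symm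
  have hr : P.real A₂ = lam * P.real A₁ := (div_eq_iff hne).1 hratio
  have hpos2 : 0 < P.real A₂ := hr ▸ mul_pos hlam hpos
  refine ⟨φ, i₁, i₂, hi, hpos, hr, ⟨hmeas, fun i => by rw [hφ], hVi, hWi⟩, ?_⟩
  have e1 : part φ = 𝒜 := by
    ext s
    simp only [part, Finset.mem_filter, Finset.mem_image, Finset.mem_univ, true_and, hφ]
    constructor
    · rintro ⟨⟨A, rfl⟩, -⟩
      exact A.2
    · exact fun hs => ⟨⟨⟨s, hs⟩, rfl⟩, hpart.2.1 s hs⟩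
  have f1 : swapLab V W i₁ i₂ φ ⁻¹' {i₁} = (A₁ \ V) ∪ W := by
    rw [swapLab_preimage_left hi hVi hWi, hφ]
  have f2 : swapLab V W i₁ i₂ φ ⁻¹' {i₂} = (A₂ \ W) ∪ V := by
    rw [swapLab_preimage_right hi hVi hWi, hφ]
  have f3 : ∀ i, i ≠ i₁ → i ≠ i₂ → swapLab V W i₁ i₂ φ ⁻¹' {i} = i.1 := by
    intro i a b
    rw [swapLab_preimage_other hVi hWi a b, hφ]
  -- The new atoms are nonempty because they have the measures of `A₁` and `A₂`, which are positive
  -- as `lam > 0`.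
  have g1 : (A₁ \ V) ∪ W ≠ ∅ := by
    intro h
    have := law_swapLab hi hV hW hVi hWi hVW i₁
    rw [f1, h, hφ, measureReal_empty] at this
    exact hpos.ne this
  have g2 : (A₂ \ W) ∪ V ≠ ∅ := by
    intro h
    have := law_swapLab hi hV hW hVi hWi hVW i₂
    rw [f2, h, hφ, measureReal_empty] at this
    exact hpos2.ne this
  have e2 : part (swapLab V W i₁ i₂ φ) = swap V W A₁ A₂ 𝒜 := by
    ext s
    simp only [part, swap, Finset.mem_filter, Finset.mem_image, Finset.mem_univ, true_and,
      Finset.mem_insert, Finset.mem_erase]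
    constructor
    · rintro ⟨⟨i, rfl⟩, -⟩
      by_cases c1 : i = i₁
      · left; rw [c1, f1]
      by_cases c2 : i = i₂
      · right; left; rw [c2, f2]
      right; right
      rw [f3 i c1 c2]
      exact ⟨fun h => c2 (Subtype.ext h), fun h => c1 (Subtype.ext h), i.2⟩
    · rintro (rfl | rfl | ⟨a, b, c⟩)
      · exact ⟨⟨i₁, f1⟩, g1⟩
      · exact ⟨⟨i₂, f2⟩, g2⟩
      · exact ⟨⟨⟨s, c⟩, f3 _ (fun h => b (congrArg Subtype.val h))
          (fun h => a (congrArg Subtype.val h))⟩, hpart.2.1 s c⟩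
  rw [incr, e1, e2]

/-- The increment `I(T_{V,W}𝒜) − I(𝒜)` does not depend on the
choice of `𝒜 ∈ F_λ(V,W)`. -/
theorem swap_increment_independent_of_partition
    {Ω : Type*} [MeasurableSpace Ω] (P : Measure Ω) [IsProbabilityMeasure P]
    (hD : Darboux P) (I : Finset (Set Ω) → ℝ) (hAPE : IsAPE P I)
    (lam : ℝ) (hlam : 0 < lam)
    (V W : Set Ω) (hV : MeasurableSet V) (hW : MeasurableSet W)
    (hdisj : Disjoint V W) (hVW : P V = P W)
    (𝒜 ℬ : Finset (Set Ω)) (A₁ A₂ B₁ B₂ : Set Ω)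
    (h𝒜 : memF P V W lam 𝒜 A₁ A₂) (hℬ : memF P V W lam ℬ B₁ B₂) :
    I (swap V W A₁ A₂ 𝒜) - I 𝒜 = I (swap V W B₁ B₂ ℬ) - I ℬ := by
  have hVW' : P.real V = P.real W := congrArg ENNReal.toReal hVW
  obtain ⟨φ, i₁, i₂, hi, hp0, hp, hφ, eφ⟩ := h𝒜.exists_label hlam hV hW hVW' I
  obtain ⟨ψ, k₁, k₂, hk, hq0, hq, hψ, eψ⟩ := hℬ.exists_label hlam hV hW hVW' I
  rw [← eφ, ← eψ]
  exact incr_eq hD hAPE hlam _ _ hi hk hp0 hq0 hp hq V W φ ψ hV hW hVW' hφ hψ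

end APE
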